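/- Let d ≥ 0, let (σ_i)_{i∈Π} be a Nash equilibrium in the truncated game G^d and let ρ be its outcome. Assume ρ has a prefix αβγ, where β contains at least one vertex, such that Visit(α) = Visit(αβγ), last(α) = last(αβ), |αβ| ≤ l·|V| and |αβγ| = (l+1)·|V| for some l ≥ 1. Then there exists a finite-memory Nash equilibrium (τ_i)_{i∈Π} in the game G whose type equals Visit(α). -/

import Mathlib

/-- A quantitative multiplayer reachability game: a finite directed graph whose
vertex set is partitioned among the players (via `owner`), with an initial vertex `v0`,
an edge relation `E` such that every vertex has an outgoing edge, and a goal set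
`goal i` for each player `i`. -/
structure ReachGame (P : Type) (V : Type) where
  owner : V → P
  v0 : V
  E : V → V → Prop
  total : ∀ v : V, ∃ w : V, E v w
  goal : P → Set V

namespace ReachGame

variable {P V : Type} [DecidableEq P] (G : ReachGame P V)

/-- The last vertex of a history (with default `v0`). -/
def lastV (h : List V) : V := h.getLastD G.v0

/-- A history: a nonempty finite path in the graph starting at `v0`. -/
def IsHistory (h : List V) : Prop :=
  h ≠ [] ∧ h.head? = some G.v0 ∧ List.Chain' G.E h

/-- A play: an infinite path starting at `v0`. -/
def IsPlay (ρ : ℕ → V) : Prop :=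
  ρ 0 = G.v0 ∧ ∀ k : ℕ, G.E (ρ k) (ρ (k + 1))

/-- `σ` is a (total encoding of a) strategy of player `i`: on every history ending in
a vertex owned by `i` it chooses a successor along an edge. -/
def IsStrategy (i : P) (σ : List V → V) : Prop :=
  ∀ h : List V, G.IsHistory h → G.owner (G.lastV h) = i → G.E (G.lastV h) (σ h)

/-- A strategy profile: one strategy per player. -/
def IsProfile (prof : P → List V → V) : Prop :=
  ∀ i : P, G.IsStrategy i (prof i)

/-- The history of length `n` (i.e. with `n` edges) obtained by letting the players
follow the profile `prof` from `v0`. -/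
def outHist (prof : P → List V → V) : ℕ → List V
  | 0 => [G.v0]
  | n + 1 => outHist prof n ++ [prof (G.owner (G.lastV (outHist prof n))) (outHist prof n)]

/-- The outcome play of the strategy profile `prof`. -/
def outcome (prof : P → List V → V) (n : ℕ) : V :=
  G.lastV (G.outHist prof n)

/-- The cost of player `i` for the play `ρ`: the least `l` with `ρ l ∈ goal i`,
and `⊤` (`+∞`) if there is no such `l`. -/
noncomputable def cost (i : P) (ρ : ℕ → V) : ℕ∞ :=
  sInf {n : ℕ∞ | ∃ l : ℕ, n = (l : ℕ∞) ∧ ρ l ∈ G.goal i}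

/-- Nash equilibrium: no player can strictly decrease his cost by a unilateral
deviation. -/
def IsNash (prof : P → List V → V) : Prop :=
  ∀ (j : P) (σ' : List V → V), G.IsStrategy j σ' →
    G.cost j (G.outcome prof) ≤ G.cost j (G.outcome (Function.update prof j σ'))

/-- `h ≈_σ h'` : the strategy `σ` of player `i` behaves the same after `h` and `h'`,
i.e. `σ (h ++ δ) = σ (h' ++ δ)` for every suffix `δ` making both `h ++ δ` and
`h' ++ δ` histories ending in a vertex of player `i`. -/
def MemEq (i : P) (σ : List V → V) (h h' : List V) : Prop :=
  ∀ δ : List V,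
    G.IsHistory (h ++ δ) → G.owner (G.lastV (h ++ δ)) = i →
    G.IsHistory (h' ++ δ) → G.owner (G.lastV (h' ++ δ)) = i →
    σ (h ++ δ) = σ (h' ++ δ)

/-- A strategy of player `i` is finite-memory if the relation `≈_σ` has finitely many
equivalence classes on histories, i.e. there is a finite set of histories meeting
every class. -/
def FiniteMemory (i : P) (σ : List V → V) : Prop :=
  ∃ S : Finset (List V), ∀ h : List V, G.IsHistory h →
    ∃ h' ∈ S, G.IsHistory h' ∧ G.MemEq i σ h h'

/-- A profile is finite-memory if each of its strategies is. -/
def FiniteMemoryProfile (prof : P → List V → V) : Prop :=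
  ∀ i : P, G.FiniteMemory i (prof i)

/-- `Visit h`: the set of players whose goal set is visited by the finite path `h`. -/
def visitL (h : List V) : Set P := {i : P | ∃ v ∈ h, v ∈ G.goal i}

/-- The type of a strategy profile: the set of players whose goal set is visited by
the outcome. -/
def typeOf (prof : P → List V → V) : Set P :=
  {i : P | ∃ l : ℕ, G.outcome prof l ∈ G.goal i}

/-! ### The truncated game `G^d` -/

/-- A strategy of player `i` in the truncated game `G^d` : it chooses a successor on
every history with less than `d` edges (list length `≤ d`) ending in a vertex of `i`. -/
def IsStrategyTrunc (d : ℕ) (i : P) (σ : List V → V) : Prop :=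
  ∀ h : List V, G.IsHistory h → h.length ≤ d → G.owner (G.lastV h) = i →
    G.E (G.lastV h) (σ h)

/-- A strategy profile of the truncated game `G^d`. -/
def IsProfileTrunc (d : ℕ) (prof : P → List V → V) : Prop :=
  ∀ i : P, G.IsStrategyTrunc d i (prof i)

/-- The cost of player `i` for a finite play `h` (a list of vertices): the least
position of `h` lying in `goal i`, and `⊤` if `goal i` is not visited. -/
noncomputable def costList (i : P) (h : List V) : ℕ∞ :=
  sInf {n : ℕ∞ | ∃ l : ℕ, n = (l : ℕ∞) ∧ l < h.length ∧ h.getD l G.v0 ∈ G.goal i}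

/-- Nash equilibrium of the truncated game `G^d` (whose plays are the histories with
exactly `d` edges). -/
def IsNashTrunc (d : ℕ) (prof : P → List V → V) : Prop :=
  ∀ (j : P) (σ' : List V → V), G.IsStrategyTrunc d j σ' →
    G.costList j (G.outHist prof d) ≤
      G.costList j (G.outHist (Function.update prof j σ') d)

/-- The type of a strategy profile of the truncated game `G^d`. -/
def typeOfTrunc (d : ℕ) (prof : P → List V → V) : Set P :=
  G.visitL (G.outHist prof d)

end ReachGame

/-!
Let `G.forceWithin j m` be the set of vertices from which player `j` can force a visit to his goal
within `m` steps, whatever the others do. A finitely generated play `ρ` is the outcome of a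
finite-memory Nash equilibrium as soon as it is deviation proof: whenever `ρ k` lies in
`G.forceWithin j m`, the play itself visits the goal of `j` by time `k + m`. Indeed the players can
follow `ρ` and, as soon as one of them deviates, all play against him a positional strategy keeping
him out of his `forceWithin` sets as long as possible.

The outcome of an equilibrium of `G^d` is deviation proof up to time `d`, for otherwise a player
would switch to forcing his goal. Unrolling the cycle `β` forever gives a play `αβ^ω` which is
deviation proof at all times. It only meets vertices `ρ k` with `k < |αβ|`, and since the
`forceWithin` sets stabilise after `|V|` steps, whoever can force his goal from such a vertex can do
so within `αβγ`; he therefore visits it along `αβγ`, hence already along `α`.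
-/

namespace ReachGame

section Bounds

theorem sInf_natCast_le_iff (p : ℕ → Prop) (n : ℕ) :
    sInf {x : ℕ∞ | ∃ l : ℕ, x = l ∧ p l} ≤ n ↔ ∃ l ≤ n, p l := by
  constructor
  · intro hle
    have hlt : sInf {x : ℕ∞ | ∃ l : ℕ, x = l ∧ p l} < ((n + 1 : ℕ) : ℕ∞) :=
      hle.trans_lt (by exact_mod_cast n.lt_succ_self)
    obtain ⟨_, ⟨l, rfl, hl⟩, hln⟩ := sInf_lt_iff.mp hlt
    exact ⟨l, Nat.lt_succ_iff.mp (by exact_mod_cast hln), hl⟩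
  · rintro ⟨l, hln, hl⟩
    have hmem : (l : ℕ∞) ∈ {x : ℕ∞ | ∃ l : ℕ, x = l ∧ p l} := ⟨l, rfl, hl⟩
    exact (sInf_le hmem).trans (by exact_mod_cast hln)

theorem sInf_natCast_le_sInf_natCast_iff (p q : ℕ → Prop) :
    sInf {x : ℕ∞ | ∃ l : ℕ, x = l ∧ p l} ≤ sInf {x : ℕ∞ | ∃ l : ℕ, x = l ∧ q l} ↔
      ∀ n, q n → ∃ l ≤ n, p l := by
  rw [le_sInf_iff]
  constructor
  · exact fun h n hn ↦ (sInf_natCast_le_iff p n).mp (h n ⟨n, rfl, hn⟩)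
  · rintro h _ ⟨n, rfl, hn⟩
    exact (sInf_natCast_le_iff p n).mpr (h n hn)

theorem subset_apply_card_of_monotone {α : Type*} [Fintype α] {f : ℕ → Set α} (hf : Monotone f)
    (hstep : ∀ m, f m = f (m + 1) → f (m + 1) = f (m + 2)) (m : ℕ) :
    f m ⊆ f (Fintype.card α) := by
  rcases le_total m (Fintype.card α) with hm | hm
  · exact hf hm
  have hcard : (f m).ncard = (f (Fintype.card α)).ncard := by
    refine Nat.stabilises_of_monotone (f := fun n ↦ (f n).ncard)
      (fun _ _ hab ↦ Set.ncard_le_ncard (hf hab)) (fun n ↦ ?_) (fun n hn ↦ ?_) hm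
    · simpa using Set.ncard_le_card (f n)
    · rw [hstep n (Set.eq_of_subset_of_ncard_le (hf n.le_succ) hn.ge)]
  exact (Set.eq_of_subset_of_ncard_le (hf hm) hcard.le).ge

end Bounds

variable {P V : Type} (G : ReachGame P V)

/-! ### Outcomes -/

section Outcome

@[simp]
theorem lastV_concat (h : List V) (v : V) : G.lastV (h ++ [v]) = v := by
  simp [lastV]

@[simp]
theorem length_outHist (prof : P → List V → V) (n : ℕ) :
    (G.outHist prof n).length = n + 1 := by
  induction n with
  | zero => rfl
  | succ n ih => simp [outHist, ih]

theorem outHist_ne_nil (prof : P → List V → V) (n : ℕ) : G.outHist prof n ≠ [] :=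
  List.ne_nil_of_length_eq_add_one (G.length_outHist prof n)

theorem outcome_succ (prof : P → List V → V) (n : ℕ) :
    G.outcome prof (n + 1) = prof (G.owner (G.outcome prof n)) (G.outHist prof n) := by
  simp only [outcome, outHist, lastV_concat]

theorem outHist_succ (prof : P → List V → V) (n : ℕ) :
    G.outHist prof (n + 1) = G.outHist prof n ++ [G.outcome prof (n + 1)] := by
  rw [outcome_succ]
  rfl

theorem outHist_eq_map_range (prof : P → List V → V) (n : ℕ) :
    G.outHist prof n = (List.range (n + 1)).map (G.outcome prof) := by
  induction n with
  | zero => rfl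
  | succ n ih => rw [outHist_succ, ih, List.range_succ (n := n + 1), List.map_append,
      List.map_singleton]

theorem outHist_congr {prof prof' : P → List V → V} {n : ℕ}
    (heq : ∀ i h, h.length ≤ n → prof i h = prof' i h) :
    G.outHist prof n = G.outHist prof' n := by
  induction n with
  | zero => rfl
  | succ n ih =>
    simp only [outHist]
    rw [ih fun i h hh ↦ heq i h (hh.trans n.le_succ), heq _ _ (G.length_outHist prof' n).le]

theorem eq_outHist_of_prefix {prof : P → List V → V} {d : ℕ} {h : List V} (hne : h ≠ [])
    (hpre : h <+: G.outHist prof d) : h = G.outHist prof (h.length - 1) := by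
  have hle : h.length ≤ d + 1 := by simpa using hpre.length_le
  have htake := List.prefix_iff_eq_take.mp hpre
  rwa [outHist_eq_map_range, ← List.map_take, List.take_range, min_eq_left hle,
    ← Nat.sub_add_cancel (List.length_pos_iff.mpr hne), ← outHist_eq_map_range] at htake

theorem mem_visitL_outHist {prof : P → List V → V} {n : ℕ} {i : P} :
    i ∈ G.visitL (G.outHist prof n) ↔ ∃ k ≤ n, G.outcome prof k ∈ G.goal i := by
  simp [visitL, outHist_eq_map_range]

variable {G}

theorem IsHistory.concat {h : List V} {v : V} (hh : G.IsHistory h) (hE : G.E (G.lastV h) v) :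
    G.IsHistory (h ++ [v]) := by
  obtain ⟨-, hhead, hchain⟩ := hh
  refine ⟨by simp, by simp [List.head?_append, hhead], ?_⟩
  refine List.isChain_append.mpr ⟨hchain, List.isChain_singleton v, fun x hx y hy ↦ ?_⟩
  have hlast : G.lastV h = x := by simp [lastV, List.getLastD_eq_getLast?, Option.mem_def.mp hx]
  obtain rfl : v = y := by simpa using hy
  rwa [← hlast]

theorem IsProfileTrunc.isHistory_outHist {d : ℕ} {prof : P → List V → V}
    (hprof : G.IsProfileTrunc d prof) {n : ℕ} (hn : n ≤ d) : G.IsHistory (G.outHist prof n) := by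
  induction n with
  | zero => exact ⟨by simp [outHist], rfl, List.isChain_singleton _⟩
  | succ n ih =>
    have hh := ih (Nat.le_of_succ_le hn)
    exact hh.concat (hprof _ _ hh (by simpa using hn) rfl)

theorem IsProfileTrunc.edge_outcome {d : ℕ} {prof : P → List V → V}
    (hprof : G.IsProfileTrunc d prof) {n : ℕ} (hn : n < d) :
    G.E (G.outcome prof n) (G.outcome prof (n + 1)) := by
  rw [outcome_succ]
  exact hprof _ _ (hprof.isHistory_outHist hn.le) (by simpa using hn) rfl

theorem IsProfile.edge_outcome {prof : P → List V → V} (hprof : G.IsProfile prof) (n : ℕ) :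
    G.E (G.outcome prof n) (G.outcome prof (n + 1)) :=
  IsProfileTrunc.edge_outcome (fun i h hh _ ho ↦ hprof i h hh ho) n.lt_succ_self

variable [DecidableEq P]

theorem IsProfileTrunc.update {d : ℕ} {prof : P → List V → V} (hprof : G.IsProfileTrunc d prof)
    {j : P} {σ : List V → V} (hσ : G.IsStrategyTrunc d j σ) :
    G.IsProfileTrunc d (Function.update prof j σ) :=
  (Function.forall_update_iff prof (G.IsStrategyTrunc d)).mpr ⟨hσ, fun i _ ↦ hprof i⟩

theorem IsProfile.update {prof : P → List V → V} (hprof : G.IsProfile prof) {j : P}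
    {σ : List V → V} (hσ : G.IsStrategy j σ) : G.IsProfile (Function.update prof j σ) :=
  (Function.forall_update_iff prof G.IsStrategy).mpr ⟨hσ, fun i _ ↦ hprof i⟩

variable (G)

theorem isNash_iff (prof : P → List V → V) :
    G.IsNash prof ↔ ∀ (j : P) (σ' : List V → V), G.IsStrategy j σ' →
      ∀ n, G.outcome (Function.update prof j σ') n ∈ G.goal j →
        ∃ i ≤ n, G.outcome prof i ∈ G.goal j := by
  simp only [IsNash, cost, sInf_natCast_le_sInf_natCast_iff]

theorem isNashTrunc_iff (d : ℕ) (prof : P → List V → V) :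
    G.IsNashTrunc d prof ↔ ∀ (j : P) (σ' : List V → V), G.IsStrategyTrunc d j σ' →
      ∀ n ≤ d, G.outcome (Function.update prof j σ') n ∈ G.goal j →
        ∃ i ≤ n, G.outcome prof i ∈ G.goal j := by
  have hvisit (p : P → List V → V) (j : P) (n : ℕ) :
      (n < (G.outHist p d).length ∧ (G.outHist p d).getD n G.v0 ∈ G.goal j) ↔
        n ≤ d ∧ G.outcome p n ∈ G.goal j := by
    rw [length_outHist, Nat.lt_succ_iff]
    refine and_congr_right fun hn ↦ ?_
    simp [outHist_eq_map_range, List.getD_eq_getElem?_getD, Nat.lt_succ_iff.mpr hn]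
  simp only [IsNashTrunc, costList, hvisit, sInf_natCast_le_sInf_natCast_iff]
  grind

end Outcome

/-! ### Forcing a visit to the goal -/

section Force

/-- The bounded attractor of the goal of player `j`: the vertices from which `j` can force a visit
to his goal within `m` steps against the coalition of all other players. -/
def forceWithin (j : P) : ℕ → Set V
  | 0 => G.goal j
  | m + 1 => {v | v ∈ G.goal j ∨ (G.owner v = j ∧ ∃ w, G.E v w ∧ w ∈ forceWithin j m) ∨
      (G.owner v ≠ j ∧ ∀ w, G.E v w → w ∈ forceWithin j m)}

theorem monotone_forceWithin (j : P) : Monotone (G.forceWithin j) := by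
  refine monotone_nat_of_le_succ fun m ↦ ?_
  induction m with
  | zero => exact fun v hv ↦ Or.inl hv
  | succ m ih =>
    rintro v (hgoal | ⟨ho, w, hE, hw⟩ | ⟨ho, hw⟩)
    · exact Or.inl hgoal
    · exact Or.inr (Or.inl ⟨ho, w, hE, ih hw⟩)
    · exact Or.inr (Or.inr ⟨ho, fun w hE ↦ ih (hw w hE)⟩)

theorem forceWithin_succ_congr {j : P} {m n : ℕ} (hmn : G.forceWithin j m = G.forceWithin j n) :
    G.forceWithin j (m + 1) = G.forceWithin j (n + 1) := by
  simp only [forceWithin, hmn]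

theorem forceWithin_subset_card [Fintype V] (j : P) (m : ℕ) :
    G.forceWithin j m ⊆ G.forceWithin j (Fintype.card V) :=
  subset_apply_card_of_monotone (G.monotone_forceWithin j) (fun _ ↦ G.forceWithin_succ_congr) m

/-- The least number of steps within which player `j` can force a visit to his goal from `v`, and
`⊤` if he cannot force one. -/
noncomputable def forceRank (j : P) (v : V) : ℕ∞ :=
  sInf {n : ℕ∞ | ∃ m : ℕ, n = m ∧ v ∈ G.forceWithin j m}

theorem forceRank_le_iff {j : P} {v : V} {m : ℕ} :
    G.forceRank j v ≤ m ↔ v ∈ G.forceWithin j m := by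
  rw [forceRank, sInf_natCast_le_iff]
  exact ⟨fun ⟨l, hl, hv⟩ ↦ G.monotone_forceWithin j hl hv, fun hv ↦ ⟨m, le_rfl, hv⟩⟩

theorem exists_punishing_move [Finite V] (j : P) :
    ∃ s : V → V, (∀ v, G.E v (s v)) ∧
      ∀ v m, G.owner v ≠ j → v ∉ G.forceWithin j (m + 1) → s v ∉ G.forceWithin j m := by
  have hmax (v : V) : ∃ w, G.E v w ∧ ∀ w', G.E v w' → G.forceRank j w' ≤ G.forceRank j w :=
    Set.exists_max_image {w | G.E v w} (G.forceRank j) (Set.toFinite _) (G.total v)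
  choose s hsE hsmax using hmax
  refine ⟨s, hsE, fun v m ho hv hsv ↦ hv (Or.inr (Or.inr ⟨ho, fun w hw ↦ ?_⟩))⟩
  exact G.forceRank_le_iff.mp ((hsmax v w hw).trans (G.forceRank_le_iff.mpr hsv))

theorem exists_forcing_move (j : P) :
    ∃ g : ℕ → V → V, (∀ m v, G.E v (g m v)) ∧
      ∀ m v w, G.E v w → w ∈ G.forceWithin j m → g m v ∈ G.forceWithin j m := by
  have hmove (m : ℕ) (v : V) : ∃ w', G.E v w' ∧
      ∀ w, G.E v w → w ∈ G.forceWithin j m → w' ∈ G.forceWithin j m := by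
    by_cases hex : ∃ w, G.E v w ∧ w ∈ G.forceWithin j m
    · obtain ⟨w, hE, hw⟩ := hex
      exact ⟨w, hE, fun _ _ _ ↦ hw⟩
    · obtain ⟨w, hE⟩ := G.total v
      exact ⟨w, hE, fun w' hE' hw' ↦ absurd ⟨w', hE', hw'⟩ hex⟩
  choose g hgE hg using hmove
  exact ⟨g, hgE, hg⟩

variable {G}

theorem exists_mem_goal_of_forcing_move {j : P} {g : ℕ → V → V}
    (hg : ∀ m v w, G.E v w → w ∈ G.forceWithin j m → g m v ∈ G.forceWithin j m)
    {m : ℕ} {ρ : ℕ → V} (hE : ∀ t < m, G.E (ρ t) (ρ (t + 1)))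
    (hmove : ∀ t < m, G.owner (ρ t) = j → ρ (t + 1) = g (m - (t + 1)) (ρ t))
    (hstart : ρ 0 ∈ G.forceWithin j m) : ∃ i ≤ m, ρ i ∈ G.goal j := by
  induction m generalizing ρ with
  | zero => exact ⟨0, le_rfl, hstart⟩
  | succ m ih =>
    by_cases hgoal : ρ 0 ∈ G.goal j
    · exact ⟨0, Nat.zero_le _, hgoal⟩
    have hnext : ρ 1 ∈ G.forceWithin j m := by
      rcases hstart with hgoal' | ⟨ho, w, hw, hwm⟩ | ⟨-, hall⟩
      · exact absurd hgoal' hgoal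
      · rw [hmove 0 m.succ_pos ho]
        exact hg m (ρ 0) w hw hwm
      · exact hall _ (hE 0 m.succ_pos)
    obtain ⟨i, hi, hvisit⟩ := ih (ρ := fun t ↦ ρ (t + 1)) (fun t ht ↦ hE (t + 1) (by lia))
      (fun t ht ho ↦ by rw [hmove (t + 1) (by lia) ho, Nat.add_sub_add_right]) hnext
    exact ⟨i + 1, Nat.succ_le_succ hi, hvisit⟩

variable (G) in
/-- Up to time `c`, no player gains by leaving `ρ` and forcing a visit to his goal: if he can do so
from `ρ k` by time `k + m ≤ c`, then `ρ` itself visits his goal by that time. -/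
def IsDeviationProof (c : ℕ) (ρ : ℕ → V) : Prop :=
  ∀ j k m, k + m ≤ c → ρ k ∈ G.forceWithin j m → ∃ i ≤ k + m, ρ i ∈ G.goal j

theorem IsNashTrunc.isDeviationProof_outcome [DecidableEq P] {d : ℕ} {prof : P → List V → V}
    (hnash : G.IsNashTrunc d prof) (hprof : G.IsProfileTrunc d prof) :
    G.IsDeviationProof d (G.outcome prof) := by
  intro j k m hkm hk
  obtain ⟨g, hgE, hg⟩ := G.exists_forcing_move j
  -- A history reaching time `k + t` has `k + t + 1` vertices, and `j` then moves to a vertex from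
  -- which `m - (t + 1)` steps must suffice.
  let σ' (h : List V) : V := if h.length ≤ k then prof j h else g (k + m - h.length) (G.lastV h)
  have hσ' : G.IsStrategyTrunc d j σ' := by
    intro h hh hlen ho
    dsimp only [σ']
    split_ifs with hle
    exacts [hprof j h hh hlen ho, hgE _ _]
  let prof' := Function.update prof j σ'
  have hsame : G.outcome prof' k = G.outcome prof k := by
    refine congrArg G.lastV (G.outHist_congr fun i h hh ↦ ?_)
    rcases eq_or_ne i j with rfl | hi
    · simp [prof', σ', hh]
    · simp [prof', hi]
  have hmove (t : ℕ) (ho : G.owner (G.outcome prof' (k + t)) = j) :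
      G.outcome prof' (k + t + 1) = g (m - (t + 1)) (G.outcome prof' (k + t)) := by
    rw [outcome_succ, ho]
    simp [prof', σ', outcome, add_assoc, Nat.add_sub_add_left]
  obtain ⟨i, hi, hvisit⟩ := exists_mem_goal_of_forcing_move hg
    (ρ := fun t ↦ G.outcome prof' (k + t))
    (fun t ht ↦ (hprof.update hσ').edge_outcome (by lia)) (fun t _ ↦ hmove t) (hsame ▸ hk)
  obtain ⟨i', hi', hvisit'⟩ :=
    (G.isNashTrunc_iff d prof).mp hnash j σ' hσ' (k + i) (by lia) hvisit
  exact ⟨i', by lia, hvisit'⟩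

end Force

/-! ### Strategies computed by machines -/

section Machine

/-- A Moore machine computing a strategy from the vertices visited after the initial one, which is
accounted for by the state `initial`. -/
structure StrategyMachine (V M : Type*) where
  initial : M
  step : M → V → M
  out : M → V

namespace StrategyMachine

variable {M : Type*} (A : StrategyMachine V M)

/-- The state reached after reading a history. Its first vertex is skipped. -/
def run (h : List V) : M := h.tail.foldl A.step A.initial

/-- The strategy played by the machine. -/
def strategy (h : List V) : V := A.out (A.run h)

theorem run_append {h : List V} (hne : h ≠ []) (δ : List V) :
    A.run (h ++ δ) = δ.foldl A.step (A.run h) := by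
  rw [run, run, List.tail_append_of_ne_nil hne, List.foldl_append]

theorem run_outHist_succ (prof : P → List V → V) (n : ℕ) :
    A.run (G.outHist prof (n + 1)) =
      A.step (A.run (G.outHist prof n)) (G.outcome prof (n + 1)) := by
  rw [outHist_succ, A.run_append (G.outHist_ne_nil prof n)]
  rfl

theorem finiteMemory_strategy [Finite M] (i : P) : G.FiniteMemory i A.strategy := by
  classical
  have hfin : (A.run '' {h | G.IsHistory h}).Finite := Set.toFinite _
  obtain ⟨S, hS, himage⟩ := Finset.subset_set_image_iff.mp hfin.coe_toFinset.subset
  refine ⟨S, fun h hh ↦ ?_⟩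
  obtain ⟨h', hmem, hrun⟩ : ∃ h' ∈ S, A.run h' = A.run h := by
    rw [← Finset.mem_image, himage, hfin.mem_toFinset]
    exact ⟨h, hh, rfl⟩
  refine ⟨h', hmem, hS hmem, fun δ _ _ _ _ ↦ ?_⟩
  rw [strategy, strategy, A.run_append hh.1, A.run_append (hS hmem).1, hrun]

variable {G A} {cur : M → V}

theorem cur_run (hinitial : cur A.initial = G.v0) (hstep : ∀ x v, cur (A.step x v) = v) {h : List V}
    (hh : h.head? = some G.v0) : cur (A.run h) = G.lastV h := by
  have hfold (t : List V) (x : M) : cur (t.foldl A.step x) = t.getLastD (cur x) := by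
    induction t generalizing x with
    | nil => rfl
    | cons v t ih => rw [List.foldl_cons, ih, hstep, List.getLastD_cons]
  obtain ⟨t, rfl⟩ := List.head?_eq_some_iff.mp hh
  rw [run, List.tail_cons, hfold, hinitial, lastV, List.getLastD_cons]

theorem cur_run_outHist (hinitial : cur A.initial = G.v0) (hstep : ∀ x v, cur (A.step x v) = v)
    (prof : P → List V → V) (n : ℕ) : cur (A.run (G.outHist prof n)) = G.outcome prof n := by
  refine cur_run hinitial hstep ?_
  rw [outHist_eq_map_range, List.range_succ_eq_map]
  rfl

theorem isStrategy_strategy (hinitial : cur A.initial = G.v0) (hstep : ∀ x v, cur (A.step x v) = v)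
    (hE : ∀ x, G.E (cur x) (A.out x)) (i : P) : G.IsStrategy i A.strategy := by
  intro h hh _
  rw [← cur_run hinitial hstep hh.2.1]
  exact hE _

end StrategyMachine

end Machine

/-! ### Following a play and punishing deviations -/

section FollowPunish

variable {K : Type*} (next : K → K) (start : K) (label : K → V) (s : P → V → V)

open Classical in
/-- The machine that follows the play `label start, label (next start), …` until some player leaves
it, and from then on plays the positional strategy `s j` against that player `j`. In state `inl k`
the play has been followed and is now in `label k`; in state `inr (u, v)` it was left at the vertex
`u`, so by the owner of `u`, and is now in `v`. -/
noncomputable def followPunish : StrategyMachine V (K ⊕ V × V) where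
  initial := Sum.inl start
  step
    | Sum.inl k, w => if w = label (next k) then Sum.inl (next k) else Sum.inr (label k, w)
    | Sum.inr (u, _), w => Sum.inr (u, w)
  out
    | Sum.inl k => label (next k)
    | Sum.inr (u, v) => s (G.owner u) v

/-- The current vertex of the game, read off the state of `followPunish`. -/
def followPunishCur : K ⊕ V × V → V := Sum.elim label Prod.snd

variable {G next start label s}

theorem followPunishCur_step (x : K ⊕ V × V) (w : V) :
    followPunishCur label ((G.followPunish next start label s).step x w) = w := by
  rcases x with k | ⟨u, v⟩
  · by_cases hw : w = label (next k) <;> simp [followPunish, followPunishCur, hw]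
  · rfl

theorem edge_followPunish_out (hE : ∀ k, G.E (label k) (label (next k)))
    (hsE : ∀ j v, G.E v (s j v)) (x : K ⊕ V × V) :
    G.E (followPunishCur label x) ((G.followPunish next start label s).out x) := by
  rcases x with k | ⟨u, v⟩
  exacts [hE k, hsE _ v]

theorem run_outHist_followPunish (n : ℕ) :
    (G.followPunish next start label s).run
      (G.outHist (fun _ ↦ (G.followPunish next start label s).strategy) n) =
      Sum.inl (next^[n] start) := by
  induction n with
  | zero => rfl
  | succ n ih =>
    rw [StrategyMachine.run_outHist_succ, outcome_succ, StrategyMachine.strategy, ih,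
      Function.iterate_succ_apply']
    simp [followPunish]

theorem outcome_followPunish (h0 : label start = G.v0) (n : ℕ) :
    G.outcome (fun _ ↦ (G.followPunish next start label s).strategy) n =
      label (next^[n] start) := by
  rw [← StrategyMachine.cur_run_outHist (A := G.followPunish next start label s)
    (cur := followPunishCur label) h0 followPunishCur_step, run_outHist_followPunish]
  rfl

theorem run_outHist_of_forall_ne_eq_followPunish (h0 : label start = G.v0) {j : P}
    {prof : P → List V → V}
    (hprof : ∀ i ≠ j, prof i = (G.followPunish next start label s).strategy) (t : ℕ) :
    (G.followPunish next start label s).run (G.outHist prof t) = Sum.inl (next^[t] start) ∨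
      ∃ u, G.owner u = j ∧
        (G.followPunish next start label s).run (G.outHist prof t) =
          Sum.inr (u, G.outcome prof t) := by
  induction t with
  | zero => exact Or.inl rfl
  | succ t ih =>
    rw [StrategyMachine.run_outHist_succ]
    rcases ih with hrun | ⟨u, hu, hrun⟩ <;> rw [hrun]
    · by_cases hnext : G.outcome prof (t + 1) = label (next (next^[t] start))
      · left
        rw [hnext, Function.iterate_succ_apply']
        simp [followPunish]
      · right
        refine ⟨label (next^[t] start), ?_, by simp [followPunish, hnext]⟩
        have hcur : label (next^[t] start) = G.outcome prof t := by
          rw [← StrategyMachine.cur_run_outHist h0 followPunishCur_step prof t, hrun]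
          rfl
        by_contra ho
        refine hnext ?_
        rw [outcome_succ, ← hcur, hprof _ ho, StrategyMachine.strategy, hrun]
        rfl
    · exact Or.inr ⟨u, hu, rfl⟩

theorem outcome_notMem_forceWithin_of_followPunish (h0 : label start = G.v0) {j : P}
    (hs : ∀ v m, G.owner v ≠ j → v ∉ G.forceWithin j (m + 1) → s j v ∉ G.forceWithin j m)
    {prof : P → List V → V} (hprof : G.IsProfile prof)
    (hfollow : ∀ i ≠ j, prof i = (G.followPunish next start label s).strategy)
    {n : ℕ} (hsafe : ∀ k ≤ n, label (next^[k] start) ∉ G.forceWithin j (n - k))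
    {t : ℕ} (ht : t ≤ n) : G.outcome prof t ∉ G.forceWithin j (n - t) := by
  induction t with
  | zero =>
    have hinitial : label start = G.outcome prof 0 := h0
    exact hinitial ▸ hsafe 0 n.zero_le
  | succ t ih =>
    have hout : G.outcome prof t ∉ G.forceWithin j (n - (t + 1) + 1) := by
      rw [show n - (t + 1) + 1 = n - t by lia]
      exact ih (by lia)
    by_cases ho : G.owner (G.outcome prof t) = j
    · exact fun hmem ↦ hout (Or.inr (Or.inl ⟨ho, _, hprof.edge_outcome t, hmem⟩))
    rw [outcome_succ, hfollow _ ho, StrategyMachine.strategy]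
    rcases run_outHist_of_forall_ne_eq_followPunish h0 hfollow t with hrun | ⟨u, rfl, hrun⟩ <;>
      rw [hrun]
    · have hnext := hsafe (t + 1) ht
      rwa [Function.iterate_succ_apply'] at hnext
    · exact hs _ _ ho hout

theorem exists_finiteMemory_nash_of_isDeviationProof [DecidableEq P] [Finite V] [Finite K]
    (h0 : label start = G.v0) (hE : ∀ k, G.E (label k) (label (next k)))
    (hdev : ∀ c, G.IsDeviationProof c fun n ↦ label (next^[n] start)) :
    ∃ τ : P → List V → V, G.IsProfile τ ∧ G.FiniteMemoryProfile τ ∧ G.IsNash τ ∧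
      ∀ n, G.outcome τ n = label (next^[n] start) := by
  choose s hsE hs using G.exists_punishing_move
  let A := G.followPunish next start label s
  have hprof : G.IsProfile fun _ ↦ A.strategy :=
    A.isStrategy_strategy h0 followPunishCur_step (edge_followPunish_out hE hsE)
  refine ⟨fun _ ↦ A.strategy, hprof, A.finiteMemory_strategy G, ?_, outcome_followPunish h0⟩
  refine (G.isNash_iff _).mpr fun j σ' hσ' n hn ↦ ?_
  simp only [A, outcome_followPunish h0]
  by_contra! hno
  have hsafe (k : ℕ) (hk : k ≤ n) : label (next^[k] start) ∉ G.forceWithin j (n - k) := by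
    intro hmem
    obtain ⟨i, hi, hvisit⟩ := hdev _ j k (n - k) le_rfl hmem
    exact hno i (by lia) hvisit
  have hend := outcome_notMem_forceWithin_of_followPunish h0 (hs j) (hprof.update hσ')
    (fun i hi ↦ Function.update_of_ne hi _ _) hsafe le_rfl
  rw [Nat.sub_self] at hend
  exact hend hn

end FollowPunish

/-! ### Lassos -/

section Lasso

variable {b : ℕ} (a : Fin b)

/-- The successor on the positions `0, …, b - 1` of a lasso whose last position is followed by
`a`. -/
def lassoSucc (k : Fin b) : Fin b := if hk : k + 1 < b then ⟨k + 1, hk⟩ else a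

/-- The position at time `n` on the lasso that runs through `0, …, b - 1` and then cycles through
`a, …, b - 1`. -/
def lassoIndex (n : ℕ) : Fin b := (lassoSucc a)^[n] ⟨0, a.pos⟩

theorem lassoIndex_succ (n : ℕ) : lassoIndex a (n + 1) = lassoSucc a (lassoIndex a n) :=
  Function.iterate_succ_apply' _ _ _

theorem lassoIndex_le (n : ℕ) : (lassoIndex a n : ℕ) ≤ n := by
  induction n with
  | zero => exact le_rfl
  | succ n ih =>
    rw [lassoIndex_succ, lassoSucc]
    split_ifs with hn
    · exact Nat.succ_le_succ ih
    · lia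

theorem lassoIndex_of_lt {n : ℕ} (hn : n < b) : (lassoIndex a n : ℕ) = n := by
  induction n with
  | zero => rfl
  | succ n ih =>
    have ih := ih (Nat.lt_of_succ_lt hn)
    rw [lassoIndex_succ, lassoSucc, dif_pos (by rwa [ih])]
    simp [ih]

variable {a} {G}

theorem edge_lassoSucc {ρ : ℕ → V} (hE : ∀ k < b, G.E (ρ k) (ρ (k + 1))) (hloop : ρ a = ρ b)
    (k : Fin b) : G.E (ρ k) (ρ (lassoSucc a k)) := by
  have hk := hE k k.isLt
  rw [lassoSucc]
  split_ifs with hlt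
  · exact hk
  · have hb : (k : ℕ) + 1 = b := by lia
    rwa [hb, ← hloop] at hk

theorem IsDeviationProof.lasso [Fintype V] {ρ : ℕ → V} {c : ℕ} (hρ : G.IsDeviationProof c ρ)
    (hbc : b + Fintype.card V ≤ c)
    (hvisit : ∀ j, (∃ i ≤ c, ρ i ∈ G.goal j) → ∃ i ≤ (a : ℕ), ρ i ∈ G.goal j) (c' : ℕ) :
    G.IsDeviationProof c' fun n ↦ ρ (lassoIndex a n) := by
  intro j k m _ hk
  have hindex := lassoIndex_le a k
  have hforce : ρ (lassoIndex a k) ∈ G.forceWithin j (min m (Fintype.card V)) := by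
    rcases min_choice m (Fintype.card V) with hmin | hmin <;> rw [hmin]
    exacts [hk, G.forceWithin_subset_card j m hk]
  obtain ⟨i, hi, hgoal⟩ := hρ j _ _ (by lia) hforce
  obtain ⟨i', hi', hgoal'⟩ : ∃ i' ≤ i, i' < b ∧ ρ i' ∈ G.goal j := by
    rcases lt_or_ge i b with hib | hbi
    · exact ⟨i, le_rfl, hib, hgoal⟩
    · obtain ⟨i', hi', hgoal'⟩ := hvisit j ⟨i, by lia, hgoal⟩
      exact ⟨i', by lia, by lia, hgoal'⟩
  exact ⟨i', by lia, by simpa only [lassoIndex_of_lt a hgoal'.1] using hgoal'.2⟩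

theorem exists_lassoIndex_mem_goal_iff {ρ : ℕ → V} {j : P}
    (hvisit : (∃ i < b, ρ i ∈ G.goal j) → ∃ i ≤ (a : ℕ), ρ i ∈ G.goal j) :
    (∃ n, ρ (lassoIndex a n) ∈ G.goal j) ↔ ∃ i ≤ (a : ℕ), ρ i ∈ G.goal j := by
  constructor
  · rintro ⟨n, hn⟩
    exact hvisit ⟨_, (lassoIndex a n).isLt, hn⟩
  · rintro ⟨i, hi, hgoal⟩
    exact ⟨i, by rwa [lassoIndex_of_lt a (hi.trans_lt a.isLt)]⟩

theorem IsNashTrunc.exists_finiteMemory_nash_of_loop [DecidableEq P] [Fintype V] {d : ℕ}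
    {prof : P → List V → V} (hnash : G.IsNashTrunc d prof) (hprof : G.IsProfileTrunc d prof)
    {a b c : ℕ} (hab : a < b) (hbc : b + Fintype.card V ≤ c) (hcd : c ≤ d)
    (hloop : G.outcome prof a = G.outcome prof b)
    (hvisit : G.visitL (G.outHist prof a) = G.visitL (G.outHist prof c)) :
    ∃ τ : P → List V → V, G.IsProfile τ ∧ G.FiniteMemoryProfile τ ∧ G.IsNash τ ∧
      G.typeOf τ = G.visitL (G.outHist prof a) := by
  have hearly (j : P) (hj : ∃ i ≤ c, G.outcome prof i ∈ G.goal j) :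
      ∃ i ≤ a, G.outcome prof i ∈ G.goal j := by
    rwa [← G.mem_visitL_outHist, hvisit, G.mem_visitL_outHist]
  have hdev : G.IsDeviationProof c (G.outcome prof) := fun j k m hkm ↦
    hnash.isDeviationProof_outcome hprof j k m (hkm.trans hcd)
  obtain ⟨τ, hτprof, hτmem, hτnash, hτout⟩ := exists_finiteMemory_nash_of_isDeviationProof
    (label := fun k : Fin b ↦ G.outcome prof k) (next := lassoSucc ⟨a, hab⟩)
    (start := ⟨0, by lia⟩) rfl
    (edge_lassoSucc (fun k hk ↦ hprof.edge_outcome (by lia)) hloop)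
    (hdev.lasso hbc hearly)
  refine ⟨τ, hτprof, hτmem, hτnash, Set.ext fun j ↦ ?_⟩
  simp only [typeOf, Set.mem_ofPred_eq, hτout, mem_visitL_outHist]
  exact exists_lassoIndex_mem_goal_iff (a := ⟨a, hab⟩) fun ⟨i, hi, hgoal⟩ ↦
    hearly j ⟨i, by lia, hgoal⟩

end Lasso

end ReachGame

theorem finiteMemory_nash_of_trunc_nash_general {P V : Type} [DecidableEq P] [Fintype V]
    (G : ReachGame P V) (d : ℕ)
    (prof : P → List V → V)
    (hprof : G.IsProfileTrunc d prof) (hnash : G.IsNashTrunc d prof)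
    (α β γ rest : List V) (hα : α ≠ []) (hβ : β ≠ [])
    (hdecomp : G.outHist prof d = α ++ β ++ γ ++ rest)
    (hvisit : G.visitL α = G.visitL (α ++ β ++ γ))
    (hlast : G.lastV α = G.lastV (α ++ β))
    (hγ : Fintype.card V ≤ γ.length) :
    ∃ τ : P → List V → V,
      G.IsProfile τ ∧ G.FiniteMemoryProfile τ ∧ G.IsNash τ ∧
      G.typeOf τ = G.visitL α := by
  have hαβγ := G.eq_outHist_of_prefix (h := α ++ β ++ γ) (by simp [hα]) ⟨rest, hdecomp.symm⟩
  have hαβ := G.eq_outHist_of_prefix (h := α ++ β) (by simp [hα])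
    ⟨γ ++ rest, by rw [hdecomp, ← List.append_assoc]⟩
  have hα' := G.eq_outHist_of_prefix hα (prof := prof) (d := d)
    ⟨β ++ γ ++ rest, by simp [hdecomp]⟩
  have hlen := congrArg List.length hdecomp
  have hαpos := List.length_pos_iff.mpr hα
  have hβpos := List.length_pos_iff.mpr hβ
  simp only [ReachGame.length_outHist, List.length_append] at hlen
  rw [hαβγ, hα'] at hvisit
  rw [hαβ, hα'] at hlast
  rw [hα']
  exact hnash.exists_finiteMemory_nash_of_loop hprof (by grind) (by grind) (by grind) hlast hvisit

/-- Let `(σᵢ)` be a Nash equilibrium of the truncated game `G^d` whose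
outcome has a prefix `αβγ` (with `β` nonempty) such that `Visit(α) = Visit(αβγ)`,
`last(α) = last(αβ)`, `|αβ| ≤ l·|V|` and `|αβγ| = (l+1)·|V|` for some `l ≥ 1`
(lengths counted in edges).  Then the game `G` has a finite-memory Nash equilibrium
`(τᵢ)` whose type equals `Visit(α)`. -/
theorem finiteMemory_nash_of_trunc_nash {P V : Type} [Fintype P] [DecidableEq P] [Fintype V]
    (G : ReachGame P V) (d : ℕ)
    (prof : P → List V → V)
    (hprof : G.IsProfileTrunc d prof) (hnash : G.IsNashTrunc d prof)
    (α β γ rest : List V) (hα : α ≠ []) (hβ : β ≠ [])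
    (hdecomp : G.outHist prof d = α ++ β ++ γ ++ rest)
    (hvisit : G.visitL α = G.visitL (α ++ β ++ γ))
    (hlast : G.lastV α = G.lastV (α ++ β))
    (l : ℕ) (hl : 1 ≤ l)
    (hlen1 : (α ++ β).length - 1 ≤ l * Fintype.card V)
    (hlen2 : (α ++ β ++ γ).length - 1 = (l + 1) * Fintype.card V) :
    ∃ τ : P → List V → V,
      G.IsProfile τ ∧ G.FiniteMemoryProfile τ ∧ G.IsNash τ ∧
      G.typeOf τ = G.visitL α := by
  have hγ : Fintype.card V ≤ γ.length := by grind
  exact finiteMemory_nash_of_trunc_nash_general G d prof hprof hnash α β γ rest hα hβ hdecomp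
    hvisit hlast hγ
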